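/- Let G be a chain graph with chain components 𝒯 and let ≺ be a strict total order of 𝒯 consistent with G. A strictly positive joint probability mass function p obeys the block-recursive Markov property of type IV for G if and only if for every T ∈ 𝒯: (a) p_{T|pre(T)} = p_{T|pa_D(T)}; (b) p_{A|pa_D(T)} = p_{A|pa_G(A)} for every connected subset A ⊆ T; and (c) p_{A|pa_D(T)} = ∏_{j=1}^r p_{A_j|pa_D(T)} for every disconnected subset A ⊆ T with connected components A_1,…,A_r. -/

import Mathlib

open scoped Classical BigOperators

/-- A mixed graph on a node set `V`: a set of directed edges and a symmetric
irreflexive set of undirected edges, the two edge sets being disjoint. -/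
structure MixedGraph (V : Type*) where
  dir : V → V → Prop
  undir : V → V → Prop
  undir_symm : ∀ {a b}, undir a b → undir b a
  undir_irrefl : ∀ a, ¬ undir a a
  edge_disjoint : ∀ a b, dir a b → ¬ undir a b

namespace MixedGraph

variable {V : Type*} [Fintype V] [DecidableEq V] (G : MixedGraph V)

/-- One step of a semi-directed path: an undirected edge or a directed edge
followed in the direction of traversal. -/
def step (a b : V) : Prop := G.dir a b ∨ G.undir a b

/-- No semi-directed cycle: there is no directed edge `a → b` together with a
semi-directed path from `b` back to `a`. -/
def NoSemiDirectedCycle : Prop :=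
  ∀ a b : V, G.dir a b → ¬ Relation.ReflTransGen G.step b a

/-- Two nodes are in the same chain component iff they are joined by a path of
undirected edges (the equivalence relation generated by the undirected part). -/
def sameComp (a b : V) : Prop := Relation.ReflTransGen G.undir a b

/-- The chain component of a node. -/
noncomputable def component (v : V) : Finset V :=
  Finset.univ.filter fun w => G.sameComp v w

/-- `T` is a chain component of `G`. -/
def IsComponent (T : Finset V) : Prop := ∃ v, T = G.component v

/-- The collection of chain components of `G`. -/
noncomputable def componentsF : Finset (Finset V) :=
  Finset.univ.image fun v => G.component v

/-- The parents `pa_G(A)`: nodes outside `A` with a directed edge into `A`. -/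
noncomputable def paG (A : Finset V) : Finset V :=
  Finset.univ.filter fun w => w ∉ A ∧ ∃ v ∈ A, G.dir w v

/-- The (inclusive) neighbours `Nb_G(A)`: `A` together with all nodes joined to
`A` by an undirected edge. -/
noncomputable def nbG (A : Finset V) : Finset V :=
  A ∪ Finset.univ.filter fun w => ∃ v ∈ A, G.undir v w

/-- The edge relation of the directed graph `D` of chain components:
`T₁ → T₂` iff they are distinct chain components and `G` has a directed edge
from a node of `T₁` to a node of `T₂`. -/
def dirD (T₁ T₂ : Finset V) : Prop :=
  G.IsComponent T₁ ∧ G.IsComponent T₂ ∧ T₁ ≠ T₂ ∧ ∃ v ∈ T₁, ∃ w ∈ T₂, G.dir v w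

/-- `pa_D(T)`: the union of the parent components of `T` in `D`. -/
noncomputable def paD (T : Finset V) : Finset V :=
  Finset.univ.filter fun w => G.dirD (G.component w) T

/-- `nd_D(T)`: the union of the components `T'` such that there is no directed
path from `T` to `T'` in `D`. -/
noncomputable def ndD (T : Finset V) : Finset V :=
  Finset.univ.filter fun w => ¬ Relation.ReflTransGen G.dirD T (G.component w)

/-- A set of nodes `A` is connected if the subgraph of the undirected part of
`G` induced by `A` is connected (in particular nonempty). -/
def ConnectedIn (A : Finset V) : Prop :=
  A.Nonempty ∧ ∀ a ∈ A, ∀ b ∈ A,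
    Relation.ReflTransGen (fun x y => x ∈ A ∧ y ∈ A ∧ G.undir x y) a b

/-- The connected component of `v` inside the induced subgraph on `A`. -/
noncomputable def compIn (A : Finset V) (v : V) : Finset V :=
  A.filter fun w =>
    Relation.ReflTransGen (fun x y => x ∈ A ∧ y ∈ A ∧ G.undir x y) v w

/-- The set of connected components of the induced subgraph on `A`. -/
noncomputable def connComps (A : Finset V) : Finset (Finset V) :=
  A.image fun v => G.compIn A v

/-- `ord` is a strict total order of the chain components consistent with `G`:
`ord T T'` implies that `T` is not a parent component of `T'`. -/
def ConsistentOrder (ord : Finset V → Finset V → Prop) : Prop :=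
  (∀ T₁ T₂, G.IsComponent T₁ → G.IsComponent T₂ → T₁ ≠ T₂ →
      ord T₁ T₂ ∨ ord T₂ T₁) ∧
  (∀ T, G.IsComponent T → ¬ ord T T) ∧
  (∀ T₁ T₂ T₃, G.IsComponent T₁ → G.IsComponent T₂ → G.IsComponent T₃ →
      ord T₁ T₂ → ord T₂ T₃ → ord T₁ T₃) ∧
  (∀ T₁ T₂, G.IsComponent T₁ → G.IsComponent T₂ → ord T₁ T₂ → ¬ G.dirD T₁ T₂)

/-- `pre(T)`: the union of all the chain components `T'` with `T ≺ T'`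
(the predecessors, i.e. the past, of `T`). -/
noncomputable def pre (ord : Finset V → Finset V → Prop) (T : Finset V) :
    Finset V :=
  Finset.univ.filter fun w => ord T (G.component w)

end MixedGraph

/-- A cell of the joint contingency table: variable `v` takes one of the
levels `0, …, r v - 1` (level `0` playing the role of the first level `1`). -/
abbrev Cell {V : Type*} (r : V → ℕ) := ∀ v : V, Fin (r v)

variable {V : Type*} [Fintype V] [DecidableEq V] {r : V → ℕ}

/-- The marginal probability `p_S(i_S)` (as a function of a full cell `i`,
depending on it only through the coordinates in `S`). -/
noncomputable def marginal (p : Cell r → ℝ) (S : Finset V) (i : Cell r) : ℝ :=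
  ∑ j : Cell r, if ∀ v ∈ S, j v = i v then p j else 0

/-- The conditional probability `p_{A|B}(i_A | i_B)`. -/
noncomputable def condProb (p : Cell r → ℝ) (A B : Finset V) (i : Cell r) : ℝ :=
  marginal p (A ∪ B) i / marginal p B i

/-- `p` is a strictly positive joint probability mass function. -/
def IsPosPMF (p : Cell r → ℝ) : Prop :=
  (∀ i, 0 < p i) ∧ ∑ i : Cell r, p i = 1

/-- Conditional independence `A ⊥ B | C`. -/
def CondIndep (p : Cell r → ℝ) (A B C : Finset V) : Prop :=
  ∀ i : Cell r,
    marginal p (A ∪ B ∪ C) i * marginal p C i =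
      marginal p (A ∪ C) i * marginal p (B ∪ C) i

/-- The cell agreeing with `i` on `S` and equal to the first (reference)
level outside `S`. -/
def splice (hr : ∀ v, 2 ≤ r v) (S : Finset V) (i : Cell r) : Cell r :=
  fun v => if v ∈ S then i v else ⟨0, by have := hr v; omega⟩

/-- The conditional multivariate logistic contrast
`η^{(A)}(i_A | i_B) = Σ_{s ⊆ A} (−1)^{|A∖s|} log p_{A|B}((i_s, 1_{A∖s}) | i_B)`. -/
noncomputable def mlContrast (hr : ∀ v, 2 ≤ r v) (p : Cell r → ℝ)
    (A B : Finset V) (i : Cell r) : ℝ :=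
  ∑ s ∈ A.powerset,
    (-1 : ℝ) ^ (A \ s).card * Real.log (condProb p A B (splice hr (s ∪ B) i))

/-- The multivariate regression (MR) Markov property for the chain graph `G`
with respect to the consistent ordering `ord`: for every chain component `T`
and every nonempty `A ⊆ T`, (MR1) if `A` is connected then
`A ⊥ (pre(T)∖pa_G(A)) | pa_G(A)`, and (MR2) if `A` is disconnected then its
connected components are mutually independent given `pre(T)`. -/
def MRMarkov (G : MixedGraph V) (ord : Finset V → Finset V → Prop)
    (p : Cell r → ℝ) : Prop :=
  ∀ T : Finset V, G.IsComponent T → ∀ A ⊆ T, A.Nonempty →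
    (G.ConnectedIn A →
      CondIndep p A (G.pre ord T \ G.paG A) (G.paG A)) ∧
    (¬ G.ConnectedIn A →
      ∀ i : Cell r,
        condProb p A (G.pre ord T) i =
          ∏ Aj ∈ G.connComps A, condProb p Aj (G.pre ord T) i)

/-- The block-recursive Markov property of type IV for the chain graph `G`:
(IV0) `T ⊥ (nd_D(T)∖pa_D(T)) | pa_D(T)`;
(IV1) `A ⊥ (pa_D(T)∖pa_G(A)) | pa_G(A)` for all `A ⊆ T`;
(IV2) `A ⊥ (T∖Nb_G(A)) | pa_D(T)` for all connected `A ⊆ T`. -/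
def TypeIVMarkov (G : MixedGraph V) (p : Cell r → ℝ) : Prop :=
  (∀ T : Finset V, G.IsComponent T →
      CondIndep p T (G.ndD T \ G.paD T) (G.paD T)) ∧
  (∀ T : Finset V, G.IsComponent T → ∀ A ⊆ T,
      CondIndep p A (G.paD T \ G.paG A) (G.paG A)) ∧
  (∀ T : Finset V, G.IsComponent T → ∀ A ⊆ T, G.ConnectedIn A →
      CondIndep p A (T \ G.nbG A) (G.paD T))

/-!
A conditional density `p_{A|B}` that does not depend on the coordinates in `B ∖ C` equals `p_{A|C}`:
multiply by `p_B` and sum those coordinates out. This yields the decomposition property of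
conditional independence, and it lets (b) and (c) give (IV1), because the product of the factors
`p_{A_j|pa_G(A_j)}` depends only on the coordinates in `A ∪ pa_G(A)`.

(IV2) and (c) are equivalent because splitting off one connected component of `A` at a time
factorizes `p_{A|pa_D(T)}`.

For (a) ⇒ (IV0), remove from the ancestral set `nd_D(T)` its last component `L` for as long as one
lies after `T`. By (a), `L` is independent of all the other nodes in play given `pa_D(L)`, hence of
`T` given the remaining non-descendants, so by symmetry removing `L` does not change the conditional
density of `T`. What is left lies in `pre(T)`, where (a) applies to `T` itself.
-/

section Marginals

variable {p : Cell r → ℝ} {A B B' C D S : Finset V}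

theorem marginal_pos (hp : ∀ i, 0 < p i) (S : Finset V) (i : Cell r) : 0 < marginal p S i := by
  refine Finset.sum_pos' (fun j _ => ?_) ⟨i, Finset.mem_univ i, ?_⟩
  · split_ifs
    exacts [(hp j).le, le_rfl]
  · simpa only [implies_true, if_true] using hp i

theorem dependsOn_marginal (p : Cell r → ℝ) (S : Finset V) : DependsOn (marginal p S) S := by
  intro i j hij
  refine Finset.sum_congr rfl fun k _ => if_congr (forall₂_congr fun v hv => ?_) rfl rfl
  rw [hij v hv]

theorem dependsOn_condProb (p : Cell r → ℝ) (A B : Finset V) :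
    DependsOn (condProb p A B) ↑(A ∪ B) := by
  intro i j hij
  rw [condProb, condProb, dependsOn_marginal p _ hij,
    dependsOn_marginal p B fun v hv => hij v (Finset.mem_union_right A hv)]

theorem marginal_eq_sum_updateFinset (p : Cell r → ℝ) (hDS : Disjoint D S) (i : Cell r) :
    marginal p S i =
      ∑ y : (∀ v : D, Fin (r v)), marginal p (D ∪ S) (Function.updateFinset i D y) := by
  have agree_iff (j : Cell r) (y : ∀ v : D, Fin (r v)) :
      (∀ v ∈ D ∪ S, j v = Function.updateFinset i D y v) ↔
        D.restrict j = y ∧ ∀ v ∈ S, j v = i v := by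
    rw [Finset.forall_mem_union, funext_iff, Subtype.forall]
    refine and_congr (forall₂_congr fun v hv => ?_) (forall₂_congr fun v hv => ?_)
    · simp only [Function.updateFinset, hv, dite_true, Finset.restrict]
    · simp only [Function.updateFinset, Finset.disjoint_right.1 hDS hv, dite_false]
  simp only [marginal, agree_iff, ite_and]
  rw [Finset.sum_comm]
  refine Finset.sum_congr rfl fun j _ => ?_
  exact (Fintype.sum_ite_eq (D.restrict j) fun _ => if ∀ v ∈ S, j v = i v then p j else 0).symm

theorem condProb_empty (hp : ∀ i, 0 < p i) (B : Finset V) (i : Cell r) : condProb p ∅ B i = 1 := by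
  rw [condProb, Finset.empty_union, div_self (marginal_pos hp B i).ne']

theorem condProb_mul_marginal (hp : ∀ i, 0 < p i) (A B : Finset V) (i : Cell r) :
    condProb p A B i * marginal p B i = marginal p (A ∪ B) i :=
  div_mul_cancel₀ _ (marginal_pos hp B i).ne'

theorem condProb_eq_of_dependsOn (hp : ∀ i, 0 < p i) (hCB : C ⊆ B) (hAB : Disjoint A (B \ C))
    (hdep : DependsOn (condProb p A B) ↑(A ∪ C)) : condProb p A B = condProb p A C := by
  have hD : Disjoint (B \ C) (A ∪ C) :=
    Finset.disjoint_union_right.2 ⟨hAB.symm, Finset.sdiff_disjoint⟩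
  have hD_union : B \ C ∪ (A ∪ C) = A ∪ B := by
    rw [Finset.union_left_comm, Finset.sdiff_union_of_subset hCB]
  funext i
  refine (eq_div_iff (marginal_pos hp C i).ne').2 ?_
  calc condProb p A B i * marginal p C i
      = ∑ y, condProb p A B i * marginal p B (Function.updateFinset i (B \ C) y) := by
        rw [marginal_eq_sum_updateFinset p Finset.sdiff_disjoint, Finset.sdiff_union_of_subset hCB,
          Finset.mul_sum]
    _ = ∑ y, marginal p (A ∪ B) (Function.updateFinset i (B \ C) y) := by
        refine Finset.sum_congr rfl fun y _ => ?_
        rw [← condProb_mul_marginal hp, hdep fun v hv => ?_]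
        simp only [Function.updateFinset, Finset.disjoint_right.1 hD hv, dite_false]
    _ = marginal p (A ∪ C) i := by
        rw [marginal_eq_sum_updateFinset p hD, hD_union]

theorem condProb_eq_of_subset (hp : ∀ i, 0 < p i) (hCB' : C ⊆ B') (hB'B : B' ⊆ B)
    (hAB : Disjoint A (B \ B')) (h : condProb p A B = condProb p A C) :
    condProb p A B' = condProb p A C := by
  rw [← h]
  refine (condProb_eq_of_dependsOn hp hB'B hAB ?_).symm
  rw [h]
  exact fun i j hij =>
    dependsOn_condProb p A C fun v hv => hij v (Finset.union_subset_union_right hCB' hv)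

theorem condIndep_iff_condProb_eq (hp : ∀ i, 0 < p i) :
    CondIndep p A B C ↔ condProb p A (B ∪ C) = condProb p A C := by
  rw [funext_iff]
  refine forall_congr' fun i => ?_
  rw [condProb, condProb, div_eq_div_iff (marginal_pos hp _ i).ne' (marginal_pos hp C i).ne',
    Finset.union_assoc]

theorem condIndep_sdiff_iff_condProb_eq (hp : ∀ i, 0 < p i) (hCB : C ⊆ B) :
    CondIndep p A (B \ C) C ↔ condProb p A B = condProb p A C := by
  rw [condIndep_iff_condProb_eq hp, Finset.sdiff_union_of_subset hCB]

theorem condIndep_iff_condProb_union_eq_mul (hp : ∀ i, 0 < p i) :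
    CondIndep p A B C ↔
      ∀ i, condProb p (A ∪ B) C i = condProb p A C i * condProb p B C i := by
  refine forall_congr' fun i => ?_
  have hC := (marginal_pos hp C i).ne'
  rw [condProb, condProb, condProb, div_mul_div_comm, div_eq_div_iff hC (mul_ne_zero hC hC),
    ← mul_assoc, mul_left_inj' hC]

theorem CondIndep.symm (h : CondIndep p A B C) : CondIndep p B A C := by
  intro i
  rw [Finset.union_comm B A, h i, mul_comm]

theorem CondIndep.decomposition (hp : ∀ i, 0 < p i) (h : CondIndep p A B C) (hB : B' ⊆ B)
    (hAB : Disjoint A B) : CondIndep p A B' C := by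
  rw [condIndep_iff_condProb_eq hp] at h ⊢
  have hsdiff : (B ∪ C) \ (B' ∪ C) ⊆ B :=
    sdiff_le_iff'.2 (Finset.union_subset_union_right Finset.subset_union_right)
  exact condProb_eq_of_subset hp Finset.subset_union_right
    (Finset.union_subset_union_left hB) (hAB.mono_right hsdiff) h

end Marginals

namespace MixedGraph

variable {G : MixedGraph V} {ord : Finset V → Finset V → Prop} {A B L S T U W : Finset V}
  {v w : V} {p : Cell r → ℝ}

section UndirectedPart

omit [Fintype V] [DecidableEq V]

theorem sameComp_symm (h : G.sameComp v w) : G.sameComp w v :=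
  have : Std.Symm G.undir := ⟨fun _ _ => G.undir_symm⟩
  Relation.ReflTransGen.stdSymm.symm _ _ h

theorem NoSemiDirectedCycle.not_dir_of_sameComp (hG : G.NoSemiDirectedCycle)
    (h : G.sameComp v w) : ¬ G.dir w v :=
  fun hd => hG w v hd (Relation.ReflTransGen.mono (fun _ _ => Or.inr) _ _ h)

/-- Adjacency in the subgraph of the undirected part of `G` induced by `A`, as a relation on all
nodes; it is the relation written out in `ConnectedIn` and `compIn`. -/
def inducedAdj (G : MixedGraph V) (A : Finset V) (x y : V) : Prop :=
  x ∈ A ∧ y ∈ A ∧ G.undir x y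

theorem reflTransGen_inducedAdj_symm (h : Relation.ReflTransGen (G.inducedAdj A) v w) :
    Relation.ReflTransGen (G.inducedAdj A) w v :=
  have : Std.Symm (G.inducedAdj A) := ⟨fun _ _ h => ⟨h.2.1, h.1, G.undir_symm h.2.2⟩⟩
  Relation.ReflTransGen.stdSymm.symm _ _ h

theorem mem_compIn :
    w ∈ G.compIn A v ↔ w ∈ A ∧ Relation.ReflTransGen (G.inducedAdj A) v w :=
  Finset.mem_filter

theorem compIn_subset (G : MixedGraph V) (A : Finset V) (v : V) : G.compIn A v ⊆ A :=
  Finset.filter_subset _ _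

theorem mem_compIn_self (hv : v ∈ A) : v ∈ G.compIn A v :=
  mem_compIn.2 ⟨hv, .refl⟩

theorem connectedIn_compIn (hv : v ∈ A) : G.ConnectedIn (G.compIn A v) := by
  have reach (w : V) (h : Relation.ReflTransGen (G.inducedAdj A) v w) :
      Relation.ReflTransGen (G.inducedAdj (G.compIn A v)) v w := by
    induction h with
    | refl => exact .refl
    | tail hvx hxy ih =>
      exact ih.tail
        ⟨mem_compIn.2 ⟨hxy.1, hvx⟩, mem_compIn.2 ⟨hxy.2.1, hvx.tail hxy⟩, hxy.2.2⟩
  refine ⟨⟨v, mem_compIn_self hv⟩, fun a ha b hb => ?_⟩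
  exact (reflTransGen_inducedAdj_symm (reach a (mem_compIn.1 ha).2)).trans
    (reach b (mem_compIn.1 hb).2)

theorem ConnectedIn.compIn_eq (hA : G.ConnectedIn A) (hv : v ∈ A) : G.compIn A v = A := by
  ext w
  rw [mem_compIn]
  exact ⟨And.left, fun hw => ⟨hw, hA.2 v hv w hw⟩⟩

end UndirectedPart

section Components

omit [DecidableEq V]

theorem mem_paD : w ∈ G.paD T ↔ G.dirD (G.component w) T := by
  simp only [paD, Finset.mem_filter_univ]

theorem mem_ndD : w ∈ G.ndD T ↔ ¬ Relation.ReflTransGen G.dirD T (G.component w) := by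
  simp only [ndD, Finset.mem_filter_univ]

theorem mem_pre : w ∈ G.pre ord T ↔ ord T (G.component w) := by
  simp only [pre, Finset.mem_filter_univ]

theorem mem_component : w ∈ G.component v ↔ G.sameComp v w := by
  simp only [component, Finset.mem_filter_univ]

theorem mem_component_self (G : MixedGraph V) (v : V) : v ∈ G.component v :=
  mem_component.2 .refl

theorem component_eq_of_mem (h : w ∈ G.component v) : G.component w = G.component v := by
  rw [mem_component] at h
  ext x
  rw [mem_component, mem_component]
  exact ⟨h.trans, (sameComp_symm h).trans⟩

theorem isComponent_component (G : MixedGraph V) (v : V) : G.IsComponent (G.component v) :=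
  ⟨v, rfl⟩

theorem IsComponent.mem_iff (hT : G.IsComponent T) : w ∈ T ↔ G.component w = T := by
  obtain ⟨v, rfl⟩ := hT
  exact ⟨component_eq_of_mem, fun h => h ▸ mem_component_self G w⟩

theorem IsComponent.disjoint_paD (hT : G.IsComponent T) : Disjoint T (G.paD T) := by
  refine Finset.disjoint_left.2 fun x hxT hx => ?_
  exact (mem_paD.1 hx).2.2.1 (hT.mem_iff.1 hxT)

theorem IsComponent.disjoint_ndD (hT : G.IsComponent T) : Disjoint T (G.ndD T) := by
  refine Finset.disjoint_left.2 fun x hxT hx => mem_ndD.1 hx ?_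
  rw [hT.mem_iff.1 hxT]

end Components

section Parents

theorem mem_paG : w ∈ G.paG A ↔ w ∉ A ∧ ∃ v ∈ A, G.dir w v := by
  simp only [paG, Finset.mem_filter_univ]

theorem paG_subset_paD (hG : G.NoSemiDirectedCycle) (hT : G.IsComponent T) (hA : A ⊆ T) :
    G.paG A ⊆ G.paD T := by
  intro w hw
  obtain ⟨-, v, hv, hd⟩ := mem_paG.1 hw
  refine mem_paD.2 ⟨isComponent_component G w, hT, fun hwT => ?_,
    w, mem_component_self G w, v, hA hv, hd⟩
  rw [← hT.mem_iff.1 (hA hv)] at hwT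
  exact hG.not_dir_of_sameComp (mem_component.1 (hwT ▸ mem_component_self G w)) hd

theorem paG_subset_union_paG (hSA : S ⊆ A) : G.paG S ⊆ A ∪ G.paG A := by
  intro w hw
  obtain ⟨-, v, hv, hd⟩ := mem_paG.1 hw
  by_cases hwA : w ∈ A
  · exact Finset.mem_union_left _ hwA
  · exact Finset.mem_union_right _ (mem_paG.2 ⟨hwA, v, hSA hv, hd⟩)

end Parents

section ConsistentOrder

omit [DecidableEq V]

theorem ConsistentOrder.ord_or_ord (hord : G.ConsistentOrder ord) (hS : G.IsComponent S)
    (hT : G.IsComponent T) (hne : S ≠ T) : ord S T ∨ ord T S :=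
  hord.1 S T hS hT hne

theorem ConsistentOrder.not_ord_self (hord : G.ConsistentOrder ord) (hT : G.IsComponent T) :
    ¬ ord T T :=
  hord.2.1 T hT

theorem ConsistentOrder.ord_trans (hord : G.ConsistentOrder ord) (hS : G.IsComponent S)
    (hT : G.IsComponent T) (hU : G.IsComponent U) (hST : ord S T) (hTU : ord T U) : ord S U :=
  hord.2.2.1 S T U hS hT hU hST hTU

theorem ConsistentOrder.not_dirD_of_ord (hord : G.ConsistentOrder ord) (hS : G.IsComponent S)
    (hT : G.IsComponent T) (hST : ord S T) : ¬ G.dirD S T :=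
  hord.2.2.2 S T hS hT hST

theorem ConsistentOrder.ord_of_dirD (hord : G.ConsistentOrder ord) (h : G.dirD S T) : ord T S :=
  (hord.ord_or_ord h.1 h.2.1 h.2.2.1).resolve_left fun hST => hord.not_dirD_of_ord h.1 h.2.1 hST h

theorem ConsistentOrder.ord_of_transGen_dirD (hord : G.ConsistentOrder ord)
    (h : Relation.TransGen G.dirD S T) : ord T S := by
  suffices G.IsComponent S ∧ G.IsComponent T ∧ ord T S from this.2.2
  induction h with
  | single hST => exact ⟨hST.1, hST.2.1, hord.ord_of_dirD hST⟩
  | tail _ hd ih =>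
    exact ⟨ih.1, hd.2.1, hord.ord_trans hd.2.1 hd.1 ih.1 (hord.ord_of_dirD hd) ih.2.2⟩

theorem ConsistentOrder.paD_subset_pre (hord : G.ConsistentOrder ord) (T : Finset V) :
    G.paD T ⊆ G.pre ord T :=
  fun _ hw => mem_pre.2 (hord.ord_of_dirD (mem_paD.1 hw))

theorem ConsistentOrder.pre_subset_ndD (hord : G.ConsistentOrder ord) (hT : G.IsComponent T) :
    G.pre ord T ⊆ G.ndD T := by
  intro w hw
  rw [mem_pre] at hw
  refine mem_ndD.2 fun hpath => hord.not_ord_self hT ?_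
  rcases Relation.reflTransGen_iff_eq_or_transGen.1 hpath with heq | hpath
  · rwa [heq] at hw
  · exact hord.ord_trans hT (isComponent_component G w) hT hw (hord.ord_of_transGen_dirD hpath)

theorem ConsistentOrder.disjoint_paD_of_ord (hord : G.ConsistentOrder ord)
    (hS : G.IsComponent S) (hT : G.IsComponent T) (hST : ord S T) : Disjoint (G.paD T) S := by
  refine Finset.disjoint_left.2 fun w hw hwS => hord.not_dirD_of_ord hS hT hST ?_
  rwa [mem_paD, hS.mem_iff.1 hwS] at hw

theorem ConsistentOrder.disjoint_pre (hord : G.ConsistentOrder ord) (hT : G.IsComponent T) :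
    Disjoint T (G.pre ord T) :=
  hT.disjoint_ndD.mono_right (hord.pre_subset_ndD hT)

/-- A set of nodes is ancestral if it is a union of chain components and contains, with each of
them, all its parent components in `D`. The induction on the last component runs over such sets. -/
def IsAncestral (G : MixedGraph V) (U : Finset V) : Prop :=
  ∀ w ∈ U, G.component w ⊆ U ∧ G.paD (G.component w) ⊆ U

theorem isAncestral_ndD (G : MixedGraph V) (T : Finset V) : G.IsAncestral (G.ndD T) := by
  intro w hw
  rw [mem_ndD] at hw
  refine ⟨fun x hx => ?_, fun x hx => mem_ndD.2 fun hpath => hw (hpath.tail (mem_paD.1 hx))⟩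
  rwa [mem_ndD, component_eq_of_mem hx]

end ConsistentOrder

section Recursion

theorem ConsistentOrder.exists_last_component (hord : G.ConsistentOrder ord) (hU : U.Nonempty) :
    ∃ v ∈ U, U \ G.component v ⊆ G.pre ord (G.component v) := by
  let R (v w : V) : Prop := ord (G.component v) (G.component w)
  have hcomp := isComponent_component G
  have : IsTrans V R := ⟨fun u v w => hord.ord_trans (hcomp u) (hcomp v) (hcomp w)⟩
  have : Std.Irrefl R := ⟨fun v => hord.not_ord_self (hcomp v)⟩
  obtain ⟨v, hvU, hmin⟩ := (Finite.wellFounded_of_trans_of_irrefl R).has_min U hU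
  refine ⟨v, hvU, fun w hw => mem_pre.2 ?_⟩
  obtain ⟨hwU, hwv⟩ := Finset.mem_sdiff.1 hw
  have hne : G.component v ≠ G.component w := fun h => hwv (h ▸ mem_component_self G w)
  exact (hord.ord_or_ord (hcomp v) (hcomp w) hne).resolve_right (hmin w hwU)

theorem ConsistentOrder.exists_last_component_of_not_subset_pre (hord : G.ConsistentOrder ord)
    (hT : G.IsComponent T) (hTW : Disjoint T W) (hW : ¬ W ⊆ G.pre ord T) :
    ∃ v ∈ W, ord (G.component v) T ∧ W \ G.component v ⊆ G.pre ord (G.component v) := by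
  obtain ⟨x, hxW, hxT⟩ := Finset.not_subset.1 hW
  obtain ⟨v, hvW, hlast⟩ := hord.exists_last_component ⟨x, hxW⟩
  refine ⟨v, hvW, ?_, hlast⟩
  have hcomp := isComponent_component G
  have hne : T ≠ G.component x := fun h =>
    Finset.disjoint_right.1 hTW hxW (h ▸ mem_component_self G x)
  have hxT' : ord (G.component x) T :=
    (hord.ord_or_ord hT (hcomp x) hne).resolve_left fun h => hxT (mem_pre.2 h)
  by_cases hxv : x ∈ G.component v
  · rwa [component_eq_of_mem hxv] at hxT'
  · have hvx := mem_pre.1 (hlast (Finset.mem_sdiff.2 ⟨hxW, hxv⟩))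
    exact hord.ord_trans (hcomp v) (hcomp x) hT hvx hxT'

theorem IsAncestral.sdiff_last (hord : G.ConsistentOrder ord) (hU : G.IsAncestral U)
    (hL : G.IsComponent L) (hlast : U \ L ⊆ G.pre ord L) : G.IsAncestral (U \ L) := by
  intro w hw
  obtain ⟨hwU, hwL⟩ := Finset.mem_sdiff.1 hw
  have hLw : Disjoint (G.component w) L := by
    refine Finset.disjoint_left.2 fun x hx hxL => hwL ?_
    rwa [hL.mem_iff, ← component_eq_of_mem hx, ← hL.mem_iff]
  exact ⟨Finset.subset_sdiff.2 ⟨(hU w hwU).1, hLw⟩, Finset.subset_sdiff.2 ⟨(hU w hwU).2,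
    hord.disjoint_paD_of_ord hL (isComponent_component G w) (mem_pre.1 (hlast hw))⟩⟩

theorem condProb_eq_condProb_paD_of_subset_pre (hord : G.ConsistentOrder ord)
    (hp : ∀ i, 0 < p i) (hT : G.IsComponent T)
    (hpre : condProb p T (G.pre ord T) = condProb p T (G.paD T))
    (hpa : G.paD T ⊆ W) (hW : W ⊆ G.pre ord T) :
    condProb p T W = condProb p T (G.paD T) :=
  condProb_eq_of_subset hp hpa hW ((hord.disjoint_pre hT).mono_right Finset.sdiff_subset) hpre

theorem condIndep_of_subset_pre (hord : G.ConsistentOrder ord) (hp : ∀ i, 0 < p i)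
    (hT : G.IsComponent T) (hpre : condProb p T (G.pre ord T) = condProb p T (G.paD T))
    (hpa : G.paD T ⊆ W) (hW : W ⊆ G.pre ord T) (hB : B ⊆ G.pre ord T) :
    CondIndep p T B W := by
  rw [condIndep_iff_condProb_eq hp,
    condProb_eq_condProb_paD_of_subset_pre hord hp hT hpre hpa hW]
  exact condProb_eq_condProb_paD_of_subset_pre hord hp hT hpre
    (hpa.trans Finset.subset_union_right) (Finset.union_subset hB hW)

theorem condProb_eq_condProb_paD_of_isAncestral (hord : G.ConsistentOrder ord)
    (hp : ∀ i, 0 < p i)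
    (hpre : ∀ S, G.IsComponent S → condProb p S (G.pre ord S) = condProb p S (G.paD S))
    (hT : G.IsComponent T) (W : Finset V) (hW : G.IsAncestral W) (hTW : Disjoint T W)
    (hpa : G.paD T ⊆ W) : condProb p T W = condProb p T (G.paD T) := by
  induction W using Finset.strongInduction with
  | H W ih =>
  by_cases hWT : W ⊆ G.pre ord T
  · exact condProb_eq_condProb_paD_of_subset_pre hord hp hT (hpre T hT) hpa hWT
  obtain ⟨v, hvW, hLT, hW'_pre⟩ := hord.exists_last_component_of_not_subset_pre hT hTW hWT
  set L := G.component v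
  have hL : G.IsComponent L := isComponent_component G v
  have hLW : L ⊆ W := (hW v hvW).1
  have hT_pre : T ⊆ G.pre ord L := fun w hw => mem_pre.2 (by rwa [hT.mem_iff.1 hw])
  have hpaL : G.paD L ⊆ W \ L :=
    Finset.subset_sdiff.2 ⟨(hW v hvW).2, hL.disjoint_paD.symm⟩
  have hpaT : G.paD T ⊆ W \ L :=
    Finset.subset_sdiff.2 ⟨hpa, hord.disjoint_paD_of_ord hL hT hLT⟩
  have hindep : CondIndep p T L (W \ L) :=
    (condIndep_of_subset_pre hord hp hL (hpre L hL) hpaL hW'_pre hT_pre).symm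
  calc condProb p T W = condProb p T (W \ L) := by
        rw [← (condIndep_iff_condProb_eq hp).1 hindep, Finset.union_sdiff_of_subset hLW]
    _ = condProb p T (G.paD T) :=
        ih _ (Finset.sdiff_ssubset hLW ⟨v, mem_component_self G v⟩)
          (hW.sdiff_last hord hL hW'_pre) (hTW.mono_right Finset.sdiff_subset) hpaT

theorem forall_condIndep_ndD_iff_forall_condProb_pre_eq (hord : G.ConsistentOrder ord)
    (hp : ∀ i, 0 < p i) :
    (∀ T, G.IsComponent T → CondIndep p T (G.ndD T \ G.paD T) (G.paD T)) ↔
      ∀ T, G.IsComponent T → condProb p T (G.pre ord T) = condProb p T (G.paD T) := by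
  have hpa_nd {T} (hT : G.IsComponent T) : G.paD T ⊆ G.ndD T :=
    (hord.paD_subset_pre T).trans (hord.pre_subset_ndD hT)
  constructor
  · intro h T hT
    exact condProb_eq_of_subset hp (hord.paD_subset_pre T) (hord.pre_subset_ndD hT)
      (hT.disjoint_ndD.mono_right Finset.sdiff_subset)
      ((condIndep_sdiff_iff_condProb_eq hp (hpa_nd hT)).1 (h T hT))
  · intro h T hT
    rw [condIndep_sdiff_iff_condProb_eq hp (hpa_nd hT)]
    exact condProb_eq_condProb_paD_of_isAncestral hord hp h hT _ (isAncestral_ndD G T)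
      hT.disjoint_ndD (hpa_nd hT)

end Recursion

section InducedComponents

omit [Fintype V]

theorem mem_connComps : S ∈ G.connComps A ↔ ∃ v ∈ A, G.compIn A v = S :=
  Finset.mem_image

theorem subset_of_mem_connComps (hS : S ∈ G.connComps A) : S ⊆ A := by
  obtain ⟨v, -, rfl⟩ := mem_connComps.1 hS
  exact compIn_subset G A v

theorem connectedIn_of_mem_connComps (hS : S ∈ G.connComps A) : G.ConnectedIn S := by
  obtain ⟨v, hv, rfl⟩ := mem_connComps.1 hS
  exact connectedIn_compIn hv

theorem ConnectedIn.connComps_eq (hA : G.ConnectedIn A) : G.connComps A = {A} := by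
  rw [connComps, Finset.image_congr fun v hv => hA.compIn_eq hv, Finset.image_const hA.1]

end InducedComponents

section Separation

theorem mem_nbG : w ∈ G.nbG A ↔ w ∈ A ∨ ∃ v ∈ A, G.undir v w := by
  simp only [nbG, Finset.mem_union, Finset.mem_filter_univ]

theorem subset_nbG (G : MixedGraph V) (A : Finset V) : A ⊆ G.nbG A :=
  Finset.subset_union_left

theorem disjoint_nbG_symm (h : Disjoint A (G.nbG B)) : Disjoint B (G.nbG A) := by
  refine Finset.disjoint_left.2 fun b hb hbA => ?_
  rcases mem_nbG.1 hbA with hbA | ⟨a, ha, hab⟩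
  · exact Finset.disjoint_left.1 h hbA (subset_nbG G B hb)
  · exact Finset.disjoint_left.1 h ha (mem_nbG.2 (.inr ⟨b, hb, G.undir_symm hab⟩))

theorem disjoint_sdiff_compIn_nbG (G : MixedGraph V) (A : Finset V) (v : V) :
    Disjoint (A \ G.compIn A v) (G.nbG (G.compIn A v)) := by
  refine Finset.disjoint_left.2 fun w hw hwN => ?_
  obtain ⟨hwA, hwS⟩ := Finset.mem_sdiff.1 hw
  rcases mem_nbG.1 hwN with hwS' | ⟨x, hx, hxw⟩
  · exact hwS hwS'
  · obtain ⟨hxA, hvx⟩ := mem_compIn.1 hx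
    exact hwS (mem_compIn.2 ⟨hwA, hvx.tail ⟨hxA, hwA, hxw⟩⟩)

theorem compIn_union_left (hAB : Disjoint B (G.nbG A)) (hv : v ∈ A) :
    G.compIn (A ∪ B) v = G.compIn A v := by
  ext w
  rw [mem_compIn, mem_compIn]
  constructor
  · rintro ⟨-, hvw⟩
    induction hvw with
    | refl => exact ⟨hv, .refl⟩
    | @tail x y _ hxy ih =>
      have hy : y ∈ A := (Finset.mem_union.1 hxy.2.1).resolve_right fun hyB =>
        Finset.disjoint_left.1 hAB hyB (mem_nbG.2 (.inr ⟨x, ih.1, hxy.2.2⟩))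
      exact ⟨hy, ih.2.tail ⟨ih.1, hy, hxy.2.2⟩⟩
  · rintro ⟨hw, hvw⟩
    refine ⟨Finset.mem_union_left B hw, Relation.ReflTransGen.mono (fun x y hxy => ?_) _ _ hvw⟩
    exact ⟨Finset.mem_union_left B hxy.1, Finset.mem_union_left B hxy.2.1, hxy.2.2⟩

theorem connComps_union (hAB : Disjoint B (G.nbG A)) :
    G.connComps (A ∪ B) = G.connComps A ∪ G.connComps B := by
  rw [connComps, Finset.image_union]
  refine congrArg₂ (· ∪ ·) (Finset.image_congr fun v hv => compIn_union_left hAB hv)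
    (Finset.image_congr fun v hvB => ?_)
  rw [Finset.union_comm]
  exact compIn_union_left (disjoint_nbG_symm hAB) hvB

theorem ConnectedIn.prod_connComps_union {M : Type*} [CommMonoid M] (hA : G.ConnectedIn A)
    (hAB : Disjoint B (G.nbG A)) (f : Finset V → M) :
    ∏ S ∈ G.connComps (A ∪ B), f S = f A * ∏ S ∈ G.connComps B, f S := by
  have hA_notMem : A ∉ G.connComps B := fun hmem =>
    hA.1.ne_empty <| disjoint_self.1 <|
      hAB.mono (subset_of_mem_connComps hmem) (subset_nbG G A)
  rw [connComps_union hAB, hA.connComps_eq, ← Finset.insert_eq, Finset.prod_insert hA_notMem]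

end Separation

section Factorization

/-- The density of every subset of `T` given `B` is the product of the densities given `B` of its
connected components. For `B = pa_D(T)` this is condition (c), extended to the connected subsets
and the empty one, for which it holds trivially, so that it can be used for every subset. -/
def ComponentFactorization (G : MixedGraph V) (p : Cell r → ℝ) (T B : Finset V) : Prop :=
  ∀ A ⊆ T, ∀ i : Cell r, condProb p A B i = ∏ Aj ∈ G.connComps A, condProb p Aj B i

theorem componentFactorization_iff_forall_not_connectedIn (hp : ∀ i, 0 < p i) :
    G.ComponentFactorization p T B ↔
      ∀ A ⊆ T, A.Nonempty → ¬ G.ConnectedIn A →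
        ∀ i : Cell r, condProb p A B i = ∏ Aj ∈ G.connComps A, condProb p Aj B i := by
  refine ⟨fun h A hA _ _ => h A hA, fun h A hA i => ?_⟩
  by_cases hconn : G.ConnectedIn A
  · rw [hconn.connComps_eq, Finset.prod_singleton]
  rcases A.eq_empty_or_nonempty with rfl | hne
  · rw [condProb_empty hp, connComps, Finset.image_empty, Finset.prod_empty]
  · exact h A hA hne hconn i

theorem componentFactorization_of_forall_condIndep_nbG (hp : ∀ i, 0 < p i)
    (h : ∀ A ⊆ T, G.ConnectedIn A → CondIndep p A (T \ G.nbG A) B) :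
    G.ComponentFactorization p T B := by
  intro A hA i
  induction A using Finset.strongInduction with
  | H A ih =>
  rcases A.eq_empty_or_nonempty with rfl | ⟨v, hv⟩
  · rw [condProb_empty hp, connComps, Finset.image_empty, Finset.prod_empty]
  set S := G.compIn A v
  have hSA : S ⊆ A := compIn_subset G A v
  have hS : G.ConnectedIn S := connectedIn_compIn hv
  have hsep : Disjoint (A \ S) (G.nbG S) := disjoint_sdiff_compIn_nbG G A v
  have hindep : CondIndep p S (A \ S) B :=
    (h S (hSA.trans hA) hS).decomposition hp
      (Finset.subset_sdiff.2 ⟨Finset.sdiff_subset.trans hA, hsep⟩)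
      (Finset.disjoint_sdiff.mono_left (subset_nbG G S))
  calc condProb p A B i = condProb p S B i * condProb p (A \ S) B i := by
        rw [← (condIndep_iff_condProb_union_eq_mul hp).1 hindep, Finset.union_sdiff_of_subset hSA]
    _ = condProb p S B i * ∏ Aj ∈ G.connComps (A \ S), condProb p Aj B i := by
        rw [ih _ (Finset.sdiff_ssubset hSA hS.1) (Finset.sdiff_subset.trans hA)]
    _ = ∏ Aj ∈ G.connComps A, condProb p Aj B i := by
        rw [← hS.prod_connComps_union hsep (condProb p · B i), Finset.union_sdiff_of_subset hSA]

theorem ComponentFactorization.condIndep_nbG (hp : ∀ i, 0 < p i)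
    (h : G.ComponentFactorization p T B) (hA : A ⊆ T) (hconn : G.ConnectedIn A) :
    CondIndep p A (T \ G.nbG A) B := by
  rw [condIndep_iff_condProb_union_eq_mul hp]
  intro i
  rw [h _ (Finset.union_subset hA Finset.sdiff_subset),
    hconn.prod_connComps_union Finset.sdiff_disjoint, ← h _ Finset.sdiff_subset]

theorem ComponentFactorization.condProb_paD_eq_condProb_paG (hG : G.NoSemiDirectedCycle)
    (hp : ∀ i, 0 < p i) (hT : G.IsComponent T) (hfac : G.ComponentFactorization p T (G.paD T))
    (hconn : ∀ A ⊆ T, G.ConnectedIn A → condProb p A (G.paD T) = condProb p A (G.paG A))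
    (hA : A ⊆ T) : condProb p A (G.paD T) = condProb p A (G.paG A) := by
  refine condProb_eq_of_dependsOn hp (paG_subset_paD hG hT hA)
    (hT.disjoint_paD.mono hA Finset.sdiff_subset) fun i j hij => ?_
  rw [hfac A hA, hfac A hA]
  refine Finset.prod_congr rfl fun S hS => ?_
  have hSA : S ⊆ A := subset_of_mem_connComps hS
  rw [hconn S (hSA.trans hA) (connectedIn_of_mem_connComps hS)]
  exact dependsOn_condProb p S (G.paG S) fun v hv =>
    hij v (Finset.union_subset (hSA.trans Finset.subset_union_left) (paG_subset_union_paG hSA) hv)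

end Factorization

end MixedGraph

/-- Lemma 1: the block-recursive Markov property of type IV
is equivalent to: (a) `p_{T|pre(T)} = p_{T|pa_D(T)}`; (b) `p_{A|pa_D(T)} =
p_{A|pa_G(A)}` for connected `A ⊆ T`; (c) `p_{A|pa_D(T)} = ∏_j p_{A_j|pa_D(T)}`
for disconnected `A ⊆ T` with connected components `A_j`. -/
theorem typeIV_iff_densities
    {V : Type*} [Fintype V] [DecidableEq V] {r : V → ℕ} (hr : ∀ v, 2 ≤ r v)
    (G : MixedGraph V) (hG : G.NoSemiDirectedCycle)
    (ord : Finset V → Finset V → Prop) (hord : G.ConsistentOrder ord)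
    (p : Cell r → ℝ) (hp : IsPosPMF p) :
    TypeIVMarkov G p ↔
      ∀ T : Finset V, G.IsComponent T →
        (∀ i : Cell r,
          condProb p T (G.pre ord T) i = condProb p T (G.paD T) i) ∧
        (∀ A ⊆ T, G.ConnectedIn A →
          ∀ i : Cell r,
            condProb p A (G.paD T) i = condProb p A (G.paG A) i) ∧
        (∀ A ⊆ T, A.Nonempty → ¬ G.ConnectedIn A →
          ∀ i : Cell r,
            condProb p A (G.paD T) i =
              ∏ Aj ∈ G.connComps A, condProb p Aj (G.paD T) i) := by
  have hpos := hp.1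
  constructor
  · rintro ⟨hIV0, hIV1, hIV2⟩ T hT
    refine ⟨?_, fun A hA _ => ?_, ?_⟩
    · exact congrFun
        ((MixedGraph.forall_condIndep_ndD_iff_forall_condProb_pre_eq hord hpos).1 hIV0 T hT)
    · exact congrFun ((condIndep_sdiff_iff_condProb_eq hpos
        (MixedGraph.paG_subset_paD hG hT hA)).1 (hIV1 T hT A hA))
    · exact (MixedGraph.componentFactorization_iff_forall_not_connectedIn hpos).1
        (MixedGraph.componentFactorization_of_forall_condIndep_nbG hpos (hIV2 T hT))
  · intro h
    have hfac T (hT : G.IsComponent T) : G.ComponentFactorization p T (G.paD T) :=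
      (MixedGraph.componentFactorization_iff_forall_not_connectedIn hpos).2 (h T hT).2.2
    refine ⟨?_, fun T hT A hA => ?_, fun T hT A hA => (hfac T hT).condIndep_nbG hpos hA⟩
    · exact (MixedGraph.forall_condIndep_ndD_iff_forall_condProb_pre_eq hord hpos).2
        fun T hT => funext (h T hT).1
    · exact (condIndep_sdiff_iff_condProb_eq hpos (MixedGraph.paG_subset_paD hG hT hA)).2
        ((hfac T hT).condProb_paD_eq_condProb_paG hG hpos hT
          (fun S hS hconn => funext ((h T hT).2.1 S hS hconn)) hA)
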